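/- Under the same setup (y = Qf + ση, Ψ = Q(QᵀQ)⁻¹Φ with ν_j = ‖ψ_j‖₂, z = (ΦΦᵀ)⁻¹ΦΨᵀy, θ̂ a minimizer of ‖Φt − z‖₂² + 2α Σ_j ν_j|t_j| with α ≥ ᾱ₀ = σ√(2(τ+1) log p)), suppose the noise event {for all j: |ψ_jᵀη| ≤ ν_j √(2(τ+1) log p)} holds. Then for every J ⊆ {1,…,p} and every t ∈ ℝᵖ with t_j = 0 for j ∉ J: ‖f_θ̂ − f‖₂² + ‖Φ(θ̂ − t)‖₂² ≤ ‖f_t − f‖₂² + 4α Σ_{j∈J} ν_j|θ̂_j − t_j|. -/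

import Mathlib

open MeasureTheory ProbabilityTheory Matrix Finset

noncomputable section

/-- Squared Euclidean norm of a vector. -/
def sqNorm {n : ℕ} (v : Fin n → ℝ) : ℝ := ∑ i, (v i)^2

/-!
For a convex penalty `g`, the objective `F t = ‖Φ t - z‖² + 2 g t` is strongly convex along `Φ`,
so a minimizer `θ` satisfies `F θ + ‖Φ (θ - t)‖² ≤ F t`. Replacing the target `z` by `f` costs
the cross term `2 ⟪Φ (θ - t), z - f⟫ = 2 ⟪θ - t, Φᵀ (z - f)⟫`. Here `Φᵀ (z - f) = Ψᵀ (σ η)`, so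
on the noise event the cross term is at most `2 α ∑ j, ν j * |θ j - t j|`. Together with the
penalty difference, the coordinates outside `J` cancel and those inside `J` contribute at most
twice.
-/

section InnerProductSpace

variable {V E : Type*} [AddCommGroup V] [Module ℝ V] [NormedAddCommGroup E] [InnerProductSpace ℝ E]

theorem norm_smul_add_smul_sq_of_add_eq_one {a b : ℝ} (hab : a + b = 1) (u v : E) :
    ‖a • u + b • v‖ ^ 2 = a * ‖u‖ ^ 2 + b * ‖v‖ ^ 2 - a * b * ‖u - v‖ ^ 2 := by
  obtain rfl : b = 1 - a := by linarith
  rw [norm_add_sq_real, norm_sub_sq_real, norm_smul, norm_smul, mul_pow, mul_pow,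
    Real.norm_eq_abs, Real.norm_eq_abs, sq_abs, sq_abs, real_inner_smul_left,
    real_inner_smul_right]
  ring

theorem norm_sq_add_norm_sq_le_of_isMinOn {s : Set V} {g : V → ℝ} (hg : ConvexOn ℝ s g)
    {L : V →ₗ[ℝ] E} {z : E} {θ t : V} (hθ : θ ∈ s) (ht : t ∈ s)
    (hmin : IsMinOn (fun v => ‖L v - z‖ ^ 2 + 2 * g v) s θ) :
    ‖L θ - z‖ ^ 2 + 2 * g θ + ‖L (θ - t)‖ ^ 2 ≤ ‖L t - z‖ ^ 2 + 2 * g t := by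
  have hsegment : ∀ a ∈ Set.Ioo (0 : ℝ) 1,
      a * ‖L (θ - t)‖ ^ 2 ≤ ‖L t - z‖ ^ 2 + 2 * g t - (‖L θ - z‖ ^ 2 + 2 * g θ) := by
    rintro a ⟨ha₀, ha₁⟩
    have hab : a + (1 - a) = 1 := by ring
    have hb : 0 < 1 - a := sub_pos.2 ha₁
    have hresidual : L (a • θ + (1 - a) • t) - z = a • (L θ - z) + (1 - a) • (L t - z) := by
      rw [map_add, map_smul, map_smul]
      module
    have hdiff : (L θ - z) - (L t - z) = L (θ - t) := by rw [map_sub, sub_sub_sub_cancel_right]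
    have hle : ‖L θ - z‖ ^ 2 + 2 * g θ ≤
        ‖L (a • θ + (1 - a) • t) - z‖ ^ 2 + 2 * g (a • θ + (1 - a) • t) :=
      hmin (hg.1 hθ ht ha₀.le hb.le hab)
    have hconvex := hg.2 hθ ht ha₀.le hb.le hab
    rw [hresidual, norm_smul_add_smul_sq_of_add_eq_one hab, hdiff] at hle
    rw [smul_eq_mul, smul_eq_mul] at hconvex
    refine le_of_mul_le_mul_left ?_ hb
    linarith
  have hlimit := le_on_closure hsegment (by fun_prop) (by fun_prop)
    (show (1 : ℝ) ∈ closure (Set.Ioo 0 1) by simp [closure_Ioo])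
  linarith

theorem norm_sub_sq_eq_norm_sub_sq_add_inner (u v f z : E) :
    ‖u - f‖ ^ 2 - ‖v - f‖ ^ 2 =
      ‖u - z‖ ^ 2 - ‖v - z‖ ^ 2 + 2 * inner ℝ (u - v) (z - f) := by
  simp only [norm_sub_sq_real, inner_sub_left, inner_sub_right]
  ring

theorem norm_sq_add_norm_sq_le_add_inner_of_isMinOn {s : Set V} {g : V → ℝ} (hg : ConvexOn ℝ s g)
    {L : V →ₗ[ℝ] E} {z : E} {θ t : V} (hθ : θ ∈ s) (ht : t ∈ s)
    (hmin : IsMinOn (fun v => ‖L v - z‖ ^ 2 + 2 * g v) s θ) (f : E) :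
    ‖L θ - f‖ ^ 2 + ‖L (θ - t)‖ ^ 2 ≤
      ‖L t - f‖ ^ 2 + 2 * (inner ℝ (L (θ - t)) (z - f) + g t - g θ) := by
  have hgrowth := norm_sq_add_norm_sq_le_of_isMinOn hg hθ ht hmin
  have hretarget := norm_sub_sq_eq_norm_sub_sq_add_inner (L θ) (L t) f z
  rw [← map_sub] at hretarget
  linarith

end InnerProductSpace

section WeightedL1

variable {ι : Type*} [Fintype ι] {w : ι → ℝ}

theorem convexOn_sum_mul_abs (hw : ∀ j, 0 ≤ w j) :
    ConvexOn ℝ Set.univ fun t : ι → ℝ => ∑ j, w j * |t j| := by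
  refine ⟨convex_univ, fun x _ y _ a b ha hb _ => ?_⟩
  simp only [smul_eq_mul, mul_sum, ← sum_add_distrib, Pi.add_apply, Pi.smul_apply]
  refine sum_le_sum fun j _ => ?_
  calc w j * |a * x j + b * y j|
      ≤ w j * (|a * x j| + |b * y j|) := mul_le_mul_of_nonneg_left (abs_add_le _ _) (hw j)
    _ = a * (w j * |x j|) + b * (w j * |y j|) := by
        rw [abs_mul, abs_mul, abs_of_nonneg ha, abs_of_nonneg hb]
        ring

theorem dotProduct_le_sum_mul_abs {v : ι → ℝ} (hv : ∀ j, |v j| ≤ w j) (u : ι → ℝ) :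
    u ⬝ᵥ v ≤ ∑ j, w j * |u j| :=
  sum_le_sum fun j _ => calc
    u j * v j ≤ |u j| * |v j| := (le_abs_self _).trans (abs_mul _ _).le
    _ ≤ |u j| * w j := mul_le_mul_of_nonneg_left (hv j) (abs_nonneg _)
    _ = w j * |u j| := mul_comm _ _

theorem abs_dotProduct_smul_le_mul {v η : ι → ℝ} {σ α ν c : ℝ} (hσ : 0 ≤ σ) (hν : 0 ≤ ν)
    (hα : σ * c ≤ α) (hη : |v ⬝ᵥ η| ≤ ν * c) : |v ⬝ᵥ (σ • η)| ≤ α * ν := by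
  rw [dotProduct_smul, smul_eq_mul, abs_mul, abs_of_nonneg hσ]
  calc σ * |v ⬝ᵥ η| ≤ σ * (ν * c) := mul_le_mul_of_nonneg_left hη hσ
    _ = σ * c * ν := by ring
    _ ≤ α * ν := mul_le_mul_of_nonneg_right hα hν

theorem sum_mul_abs_sub_add_sum_sub_sum_le (hw : ∀ j, 0 ≤ w j) {J : Finset ι} {t : ι → ℝ}
    (ht : ∀ j ∉ J, t j = 0) (θ : ι → ℝ) :
    ∑ j, w j * |θ j - t j| + ∑ j, w j * |t j| - ∑ j, w j * |θ j| ≤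
      2 * ∑ j ∈ J, w j * |θ j - t j| := by
  rw [← sum_add_distrib, ← sum_sub_distrib, mul_sum, ← sum_subset (subset_univ J)]
  · refine sum_le_sum fun j _ => ?_
    have htriangle : |t j| - |θ j| ≤ |θ j - t j| :=
      abs_sub_comm (t j) (θ j) ▸ abs_sub_abs_le_abs_sub (t j) (θ j)
    linarith [mul_le_mul_of_nonneg_left htriangle (hw j)]
  · intro j _ hj
    simp [ht j hj]

end WeightedL1

section LeastSquares

variable {m n ι R : Type*} [Fintype n] [DecidableEq n] [Fintype ι] [CommRing R]

theorem transpose_mul_nonsing_inv_gram_mul_self [Fintype m] {Q : Matrix m n R}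
    (hQ : IsUnit (Qᵀ * Q).det) : (Q * (Qᵀ * Q)⁻¹)ᵀ * Q = 1 := by
  rw [transpose_mul, transpose_nonsing_inv, transpose_mul, transpose_transpose, Matrix.mul_assoc,
    nonsing_inv_mul _ hQ]

theorem nonsing_inv_gram_mul_transpose_mul {Φ : Matrix n ι R} (hΦ : IsUnit (Φ * Φᵀ).det)
    (P : Matrix m n R) : (Φ * Φᵀ)⁻¹ * Φ * (P * Φ)ᵀ = Pᵀ := by
  rw [transpose_mul, Matrix.mul_assoc, ← Matrix.mul_assoc Φ, ← Matrix.mul_assoc,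
    nonsing_inv_mul _ hΦ, Matrix.one_mul]

theorem transpose_mulVec_target_sub_signal [Fintype m] {Q : Matrix m n R}
    (hQ : IsUnit (Qᵀ * Q).det) {Φ : Matrix n ι R} (hΦ : IsUnit (Φ * Φᵀ).det) {Ψ : Matrix m ι R}
    (hΨ : Ψ = Q * (Qᵀ * Q)⁻¹ * Φ) (f : n → R) (ε : m → R) :
    Φᵀ *ᵥ (((Φ * Φᵀ)⁻¹ * Φ * Ψᵀ) *ᵥ (Q *ᵥ f + ε) - f) = Ψᵀ *ᵥ ε := by
  rw [hΨ, nonsing_inv_gram_mul_transpose_mul hΦ, mulVec_add, mulVec_mulVec,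
    transpose_mul_nonsing_inv_gram_mul_self hQ, one_mulVec, add_sub_cancel_left, mulVec_mulVec,
    ← transpose_mul]

end LeastSquares

section Lasso

variable {n : ℕ} {ι : Type*} [Fintype ι]

theorem sqNorm_eq_norm_toLp_sq (v : Fin n → ℝ) : sqNorm v = ‖WithLp.toLp 2 v‖ ^ 2 :=
  (EuclideanSpace.real_norm_sq_eq _).symm

theorem sqNorm_mulVec_sub_add_le_of_isMinOn {g : (ι → ℝ) → ℝ} {s : Set (ι → ℝ)}
    (hg : ConvexOn ℝ s g) {Φ : Matrix (Fin n) ι ℝ} {z : Fin n → ℝ} {θ t : ι → ℝ}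
    (hθ : θ ∈ s) (ht : t ∈ s) (hmin : IsMinOn (fun v => sqNorm (Φ *ᵥ v - z) + 2 * g v) s θ)
    (f : Fin n → ℝ) :
    sqNorm (Φ *ᵥ θ - f) + sqNorm (Φ *ᵥ (θ - t)) ≤
      sqNorm (Φ *ᵥ t - f) + 2 * ((θ - t) ⬝ᵥ (Φᵀ *ᵥ (z - f)) + g t - g θ) := by
  let L : (ι → ℝ) →ₗ[ℝ] EuclideanSpace ℝ (Fin n) :=
    (WithLp.linearEquiv 2 ℝ (Fin n → ℝ)).symm.toLinearMap ∘ₗ Φ.mulVecLin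
  have hinner : inner ℝ (L (θ - t)) (WithLp.toLp 2 z - WithLp.toLp 2 f) =
      (θ - t) ⬝ᵥ (Φᵀ *ᵥ (z - f)) := by
    rw [mulVec_transpose, dotProduct_comm, ← dotProduct_mulVec]
    exact EuclideanSpace.inner_toLp_toLp (𝕜 := ℝ) _ _
  simp only [sqNorm_eq_norm_toLp_sq] at hmin ⊢
  rw [← hinner]
  exact norm_sq_add_norm_sq_le_add_inner_of_isMinOn (L := L) hg hθ ht hmin (WithLp.toLp 2 f)

theorem weighted_lasso_oracle_inequality {Φ : Matrix (Fin n) ι ℝ} {f z : Fin n → ℝ} {w : ι → ℝ}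
    (hw : ∀ j, |(Φᵀ *ᵥ (z - f)) j| ≤ w j) {θ : ι → ℝ}
    (hmin : IsMinOn (fun v => sqNorm (Φ *ᵥ v - z) + 2 * ∑ j, w j * |v j|) Set.univ θ)
    {J : Finset ι} {t : ι → ℝ} (ht : ∀ j ∉ J, t j = 0) :
    sqNorm (Φ *ᵥ θ - f) + sqNorm (Φ *ᵥ (θ - t)) ≤
      sqNorm (Φ *ᵥ t - f) + 4 * ∑ j ∈ J, w j * |θ j - t j| := by
  have hw₀ : ∀ j, 0 ≤ w j := fun j => (abs_nonneg _).trans (hw j)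
  have hbasic := sqNorm_mulVec_sub_add_le_of_isMinOn (convexOn_sum_mul_abs hw₀)
    (Set.mem_univ θ) (Set.mem_univ t) hmin f
  have hnoise : (θ - t) ⬝ᵥ (Φᵀ *ᵥ (z - f)) ≤ ∑ j, w j * |θ j - t j| :=
    dotProduct_le_sum_mul_abs hw (θ - t)
  have hpenalty := sum_mul_abs_sub_add_sum_sub_sum_le hw₀ ht θ
  linarith

theorem stmt_7_general {m : Type*} [Fintype m] (Q : Matrix m (Fin n) ℝ)
    (hQ : IsUnit (Qᵀ * Q).det) (Φ : Matrix (Fin n) ι ℝ) (hΦ : IsUnit (Φ * Φᵀ).det)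
    (Ψ : Matrix m ι ℝ) (hΨ : Ψ = Q * (Qᵀ * Q)⁻¹ * Φ) (ν : ι → ℝ) (f : Fin n → ℝ) (ε y : m → ℝ)
    (z : Fin n → ℝ) (hy : y = Q *ᵥ f + ε) (hz : z = ((Φ * Φᵀ)⁻¹ * Φ * Ψᵀ) *ᵥ y)
    (α : ℝ) (θ : ι → ℝ)
    (hmin : ∀ t : ι → ℝ,
      sqNorm (Φ *ᵥ θ - z) + 2 * α * ∑ j, ν j * |θ j| ≤
        sqNorm (Φ *ᵥ t - z) + 2 * α * ∑ j, ν j * |t j|)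
    (hnoise : ∀ j, |(fun i => Ψ i j) ⬝ᵥ ε| ≤ α * ν j)
    (J : Finset ι) (t : ι → ℝ) (ht : ∀ j ∉ J, t j = 0) :
    sqNorm (Φ *ᵥ θ - f) + sqNorm (Φ *ᵥ (θ - t)) ≤
      sqNorm (Φ *ᵥ t - f) + 4 * α * ∑ j ∈ J, ν j * |θ j - t j| := by
  have hcorrelation : ∀ j, |(Φᵀ *ᵥ (z - f)) j| ≤ α * ν j := by
    rw [hz, hy, transpose_mulVec_target_sub_signal hQ hΦ hΨ]
    exact hnoise
  have hpenalty (c : ℝ) (S : Finset ι) (u : ι → ℝ) :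
      c * α * ∑ j ∈ S, ν j * u j = c * ∑ j ∈ S, α * ν j * u j := by
    simp only [mul_sum, mul_assoc]
  simp only [hpenalty] at hmin ⊢
  exact weighted_lasso_oracle_inequality hcorrelation (isMinOn_univ_iff.2 hmin) ht

end Lasso

/-- deterministic Lasso inequality on the noise event, for vectors supported
on a set J. -/
theorem stmt_7 {n p : ℕ} (Q : Matrix (Fin n) (Fin n) ℝ) (hQ : IsUnit Q.det)
    (Φ : Matrix (Fin n) (Fin p) ℝ) (hΦ : IsUnit (Φ * Φᵀ).det)
    (Ψ : Matrix (Fin n) (Fin p) ℝ) (hΨ : Ψ = Q * (Qᵀ * Q)⁻¹ * Φ)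
    (ν : Fin p → ℝ) (hν : ∀ j, ν j = Real.sqrt (sqNorm (fun i => Ψ i j)))
    (f η : Fin n → ℝ) (σ : ℝ) (hσ : 0 < σ) (τ : ℝ) (hτ : 0 < τ)
    (y z : Fin n → ℝ) (hy : y = Q.mulVec f + σ • η)
    (hz : z = ((Φ * Φᵀ)⁻¹ * Φ * Ψᵀ).mulVec y)
    (α : ℝ) (hα : α ≥ σ * Real.sqrt (2 * (τ + 1) * Real.log p))
    (θ : Fin p → ℝ)
    (hmin : ∀ t : Fin p → ℝ,
      sqNorm (Φ.mulVec θ - z) + 2 * α * ∑ j, ν j * |θ j| ≤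
        sqNorm (Φ.mulVec t - z) + 2 * α * ∑ j, ν j * |t j|)
    (hnoise : ∀ j : Fin p,
      |(fun i => Ψ i j) ⬝ᵥ η| ≤ ν j * Real.sqrt (2 * (τ + 1) * Real.log p)) :
    ∀ (J : Finset (Fin p)) (t : Fin p → ℝ), (∀ j ∉ J, t j = 0) →
      sqNorm (Φ.mulVec θ - f) + sqNorm (Φ.mulVec (θ - t)) ≤
        sqNorm (Φ.mulVec t - f) + 4 * α * ∑ j ∈ J, ν j * |θ j - t j| := by
  exact stmt_7_general Q (by simpa only [det_mul, det_transpose] using hQ.mul hQ) Φ hΦ Ψ hΨ ν f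
    (σ • η) y z hy hz α θ hmin fun j =>
      abs_dotProduct_smul_le_mul hσ.le (hν j ▸ Real.sqrt_nonneg _) hα (hnoise j)
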